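/- arXiv:1006.0788 — 2 statements merged into one kernel-verified Lean document; each statement's English description precedes it below -/
import Mathlib

section
/- (Theorem 6.7, mirror symmetry in 3-space.) Let G be a finite simple graph with |E| = 3|V| − 6, let s ∈ O(3) be a reflection (an orthogonal involution of ℝ³ whose fixed subspace is 2-dimensional), S = {I, s}, and let Φ : S → Aut(G) be a homomorphism with j_s > b_s, where j_s is the number of vertices fixed by Φ(s) and b_s is the number of edges fixed setwise by Φ(s). Let (G,p) be an S-symmetric framework of type Φ in ℝ³ whose points p_i affinely span ℝ³ and which admits no nonzero fully (S,Φ)-symmetric self-stress (this last hypothesis playing the role of the paper's '(S,Φ)-generic' assumption, as licensed by Remark 6.2). Then (G,p) has a finite flex preserving the symmetry throughout the path. -/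
open scoped Classical

noncomputable section

abbrev Euc (d : ℕ) : Type := EuclideanSpace ℝ (Fin d)

/-- The subspace of points of `ℝ^d` fixed by a linear isometry (orthogonal transformation). -/
def fixedSpace {d : ℕ} (x : Euc d ≃ₗᵢ[ℝ] Euc d) : Submodule ℝ (Euc d) :=
  LinearMap.ker (x.toLinearEquiv.toLinearMap - LinearMap.id)


section invol
variable {M : Type*} [AddCommGroup M] [Module ℝ M]

def symSub (T : M →ₗ[ℝ] M) : Submodule ℝ M := LinearMap.ker (T - LinearMap.id)

theorem mem_symSub {T : M →ₗ[ℝ] M} {x : M} : x ∈ symSub T ↔ T x = x := by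
  simp [symSub, sub_eq_zero]

def symProj (T : M →ₗ[ℝ] M) (hT : ∀ x, T (T x) = x) : M →ₗ[ℝ] symSub T :=
  LinearMap.codRestrict _ ((1/2 : ℝ) • (LinearMap.id + T)) (by
    intro x
    rw [mem_symSub]
    simp [hT, add_comm])

theorem symProj_coe (T : M →ₗ[ℝ] M) (hT : ∀ x, T (T x) = x) (x : M) :
    ((symProj T hT x : symSub T) : M) = (1/2 : ℝ) • (x + T x) := by
  simp [symProj]

theorem symProj_self (T : M →ₗ[ℝ] M) (hT : ∀ x, T (T x) = x) (x : symSub T) :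
    symProj T hT (x : M) = x := by
  apply Subtype.ext
  rw [symProj_coe, mem_symSub.1 x.2, ← two_smul ℝ, smul_smul]; norm_num

theorem finrank_symSub [FiniteDimensional ℝ M] (T : M →ₗ[ℝ] M) (hT : ∀ x, T (T x) = x) :
    2 * (Module.finrank ℝ (symSub T) : ℝ) = Module.finrank ℝ M + LinearMap.trace ℝ M T := by
  have h : LinearMap.IsProj (symSub T) ((1/2 : ℝ) • (LinearMap.id + T)) :=
    ⟨fun x => (symProj T hT x).2, fun x hx => by
      have := symProj_self T hT ⟨x, hx⟩
      have := congrArg Subtype.val this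
      rw [symProj_coe] at this
      simpa using this⟩
  have := h.trace
  rw [← this, map_smul, map_add, LinearMap.trace_id]
  simp
end invol

theorem exists_curve {M N : Type*} [NormedAddCommGroup M] [NormedSpace ℝ M] [FiniteDimensional ℝ M]
    [NormedAddCommGroup N] [NormedSpace ℝ N] [FiniteDimensional ℝ N]
    (f : M → N) (f' : M →L[ℝ] N) (a : M) (hf : HasStrictFDerivAt f f' a)
    (hs : f'.range = ⊤) (u : M) (hu : f' u = 0) :
    ∃ γ : ℝ → M, γ 0 = a ∧ HasDerivAt γ u 0 ∧
      ∃ ε > 0, ContinuousOn γ (Set.Icc 0 ε) ∧ ∀ t ∈ Set.Icc 0 ε, f (γ t) = f a := by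
  have : CompleteSpace M := FiniteDimensional.complete ℝ M
  let u' : f'.ker := ⟨u, hu⟩
  let g := hf.implicitFunction f f' hs (f a)
  have hg : HasStrictFDerivAt g f'.ker.subtypeL 0 := hf.to_implicitFunction hs
  have hl : HasDerivAt (fun t : ℝ => t • u') u' 0 := by
    simpa using (hasDerivAt_id (0:ℝ)).smul_const u'
  have hlc : Filter.Tendsto (fun t : ℝ => t • u') (nhds 0) (nhds 0) := by
    simpa using hl.continuousAt.tendsto
  refine ⟨fun t => g (t • u'), ?_, ?_, ?_⟩
  · simp [g]
  · have h0 : HasFDerivAt g f'.ker.subtypeL ((0:ℝ) • u') := by simpa using hg.hasFDerivAt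
    have h1 := h0.comp_hasDerivAt (0:ℝ) hl
    exact h1
  · obtain ⟨K, s, hs1, hs2⟩ := hg.exists_lipschitzOnWith
    have e1 : ∀ᶠ t : ℝ in nhds 0, t • u' ∈ s := hlc hs1
    have e2 : ∀ᶠ t : ℝ in nhds 0, f (g (t • u')) = f a := by
      have := hf.map_implicitFunction_eq hs
      have h3 : Filter.Tendsto (fun t : ℝ => (f a, t • u')) (nhds 0) (nhds (f a, 0)) :=
        tendsto_const_nhds.prodMk_nhds hlc
      exact h3.eventually this
    obtain ⟨ε, hε, hb⟩ := Metric.eventually_nhds_iff.1 (e1.and e2)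
    have hb' : ∀ t ∈ Set.Icc 0 (ε/2), t • u' ∈ s ∧ f (g (t • u')) = f a := by
      intro t ht
      apply hb
      rw [Real.dist_eq, sub_zero, abs_of_nonneg ht.1]
      linarith [ht.2]
    refine ⟨ε/2, by positivity, ?_, fun t ht => (hb' t ht).2⟩
    exact hs2.continuousOn.comp (by fun_prop) (fun t ht => (hb' t ht).1)

/-- trivial motions have dimension at most three -/
theorem triv_mem {V : Type*} 
    (C : Euc 3 ≃ₗᵢ[ℝ] Euc 3) (hC2 : ∀ v, C (C v) = v)
    (e : OrthonormalBasis (Fin 2) ℝ (fixedSpace C))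
    (σ : Equiv.Perm V) 
    (p : V → Euc 3)
    (hsym : ∀ i, C (p i) = p (σ i))
    (hspan : affineSpan ℝ (Set.range p) = ⊤)
    (u : V → Euc 3) (hu : ∀ i, C (u i) = u (σ i))
    (hT : ∀ k l, inner ℝ (p k - p l) (u k - u l) = 0) :
    ∃ c : Fin 3 → ℝ, u = c 0 • (fun _ => (e 0 : Euc 3)) + c 1 • (fun _ => (e 1 : Euc 3))
      + c 2 • (fun i => inner ℝ (e 0 : Euc 3) (p i) • (e 1 : Euc 3)
          - inner ℝ (e 1 : Euc 3) (p i) • (e 0 : Euc 3)) := by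
  have hCi : ∀ x y, inner ℝ (C x) (C y) = inner ℝ x y := C.inner_map_map
  have hne : (Set.range p).Nonempty := by
    rw [← affineSpan_nonempty ℝ, hspan]; exact ⟨0, trivial⟩
  obtain ⟨_, k, rfl⟩ := hne
  have hpol : ∀ i j, inner ℝ (p i - p k) (u j - u k) + inner ℝ (p j - p k) (u i - u k) = 0 := by
    intro i j
    have h1 := hT i j
    have h2 := hT i k
    have h3 := hT j k
    simp only [inner_sub_left, inner_sub_right] at *
    linarith
  -- linear combination maps
  let lp : (V →₀ ℝ) →ₗ[ℝ] Euc 3 := Finsupp.linearCombination ℝ (fun i => p i - p k)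
  let lu : (V →₀ ℝ) →ₗ[ℝ] Euc 3 := Finsupp.linearCombination ℝ (fun i => u i - u k)
  have hlp : Function.Surjective lp := by
    rw [← LinearMap.range_eq_top, Finsupp.range_linearCombination]
    have h := vectorSpan_range_eq_span_range_vsub_right ℝ p k
    rw [← direction_affineSpan, hspan, AffineSubspace.direction_top] at h
    exact h.symm
  have hpol2 : ∀ x y, inner ℝ (lp x) (lu y) + inner ℝ (lp y) (lu x) = 0 := by
    intro x y
    induction x using Finsupp.induction_linear with
    | zero => simp
    | add a b ha hb => simp only [map_add, inner_add_left, inner_add_right]; linarith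
    | single i a =>
      induction y using Finsupp.induction_linear with
      | zero => simp
      | add c d hc hd => simp only [map_add, inner_add_left, inner_add_right] at *; linarith
      | single j b =>
        have := hpol i j
        simp only [lp, lu, Finsupp.linearCombination_single, inner_smul_left, inner_smul_right]
        simp
        linear_combination a * b * this
  have hker : ∀ x, lp x = 0 → lu x = 0 := by
    intro x hx
    obtain ⟨y, hy⟩ := hlp (lu x)
    have := hpol2 x y
    rw [hx, hy, inner_zero_left, zero_add] at this
    exact inner_self_eq_zero.1 this
  obtain ⟨g, hg⟩ := lp.exists_rightInverse_of_surjective (LinearMap.range_eq_top.2 hlp)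
  have hg' : ∀ v, lp (g v) = v := fun v => LinearMap.congr_fun hg v
  let A : Euc 3 →ₗ[ℝ] Euc 3 := lu ∘ₗ g
  have hA : ∀ x, A (lp x) = lu x := by
    intro x
    have : lu (g (lp x) - x) = 0 := hker _ (by rw [map_sub, hg', sub_self])
    rw [map_sub, sub_eq_zero] at this
    exact this
  have hAp : ∀ i, A (p i - p k) = u i - u k := by
    intro i
    have := hA (Finsupp.single i 1)
    simpa [lp, lu] using this
  have hskew : ∀ x y, inner ℝ x (A y) + inner ℝ y (A x) = 0 := by
    intro x y
    have := hpol2 (g x) (g y)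
    rwa [hg', hg'] at this
  have hAC : ∀ x, C (A x) = A (C x) := by
    intro x
    obtain ⟨y, rfl⟩ := hlp x
    induction y using Finsupp.induction_linear with
    | zero => simp
    | add a b ha hb => simp only [map_add, ha, hb]
    | single i a =>
      have h1 : lp (Finsupp.single i a) = a • (p i - p k) := by simp [lp]
      have h2 := hAp (σ i)
      have h3 := hAp (σ k)
      have h4 : A (p (σ i) - p (σ k)) = u (σ i) - u (σ k) := by
        rw [← sub_sub_sub_cancel_right _ _ (p k), map_sub, h2, h3, sub_sub_sub_cancel_right]
      rw [h1]
      simp only [map_smul, hAp, map_sub C, hsym, hu, h4]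
  have hFix : ∀ x, x ∈ fixedSpace C ↔ C x = x := by
    intro x
    simp only [fixedSpace, LinearMap.mem_ker, LinearMap.sub_apply, LinearMap.id_apply, sub_eq_zero]
    rfl
  -- decomposition
  have hdec : ∀ x, C x = x → x = inner ℝ (e 0 : Euc 3) x • (e 0 : Euc 3) + inner ℝ (e 1 : Euc 3) x • (e 1 : Euc 3) := by
    intro x hx
    have := e.sum_repr' ⟨x, (hFix x).2 hx⟩
    have := congrArg Subtype.val this
    simpa [Fin.sum_univ_two] using this.symm
  have he0 : C (e 0 : Euc 3) = e 0 := (hFix _).1 (e 0).2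
  have he1 : C (e 1 : Euc 3) = e 1 := (hFix _).1 (e 1).2
  have hAA : ∀ x, inner ℝ x (A x) = 0 := fun x => by linarith [hskew x x]
  have hperp : ∀ n, C n = -n → n ∈ (fixedSpace C)ᗮ := by
    intro n hn
    rw [Submodule.mem_orthogonal]
    intro f hf
    have h := hCi f n
    rw [(hFix f).1 hf, hn, inner_neg_right] at h
    linarith
  have hrank : Module.finrank ℝ (fixedSpace C)ᗮ = 1 := by
    have h1 := Submodule.finrank_add_finrank_orthogonal (fixedSpace C)
    have h2 : Module.finrank ℝ (fixedSpace C) = 2 := by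
      simpa using Module.finrank_eq_card_basis e.toBasis
    have h3 : Module.finrank ℝ (Euc 3) = 3 := by simp
    omega
  have hN : ∀ n, C n = -n → A n = 0 := by
    intro n hn
    by_cases h0 : n = 0
    · rw [h0, map_zero]
    have hm : C (A n) = - A n := by rw [hAC, hn, map_neg]
    obtain ⟨c, hc⟩ := (finrank_eq_one_iff_of_nonzero' (⟨n, hperp n hn⟩ : (fixedSpace C)ᗮ)
      (by simpa using h0)).1 hrank ⟨A n, hperp _ hm⟩
    have hc' : c • n = A n := congrArg Subtype.val hc
    have h2 := hAA n
    rw [← hc', inner_smul_right, mul_eq_zero] at h2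
    rcases h2 with h2 | h2
    · rw [← hc', h2, zero_smul]
    · exact absurd (inner_self_eq_zero.1 h2) h0
  have hA0 : A (e 0) = inner ℝ (e 1 : Euc 3) (A (e 0)) • (e 1 : Euc 3) := by
    have := hdec (A (e 0)) (by rw [hAC, he0])
    rwa [hAA, zero_smul, zero_add] at this
  have hA1 : A (e 1) = -inner ℝ (e 1 : Euc 3) (A (e 0)) • (e 0 : Euc 3) := by
    have := hdec (A (e 1)) (by rw [hAC, he1])
    have h2 := hskew (e 0) (e 1)
    rw [hAA, zero_smul, add_zero] at this
    rw [this]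
    congr 1
    linarith
  have hAx : ∀ x, A x = inner ℝ (e 1 : Euc 3) (A (e 0)) • (inner ℝ (e 0 : Euc 3) x • (e 1 : Euc 3)
          - inner ℝ (e 1 : Euc 3) x • (e 0 : Euc 3)) := by
    intro x
    have h1 : A (x - C x) = 0 := hN _ (by rw [map_sub, hC2, neg_sub])
    have h2 := hdec (x + C x) (by rw [map_add, hC2, add_comm])
    have h3 : ∀ y, C y = y → inner ℝ y (C x) = inner ℝ y x := by
      intro y hy
      conv_lhs => rw [← hy]
      exact hCi _ _
    rw [inner_add_right, inner_add_right, h3 _ he0, h3 _ he1] at h2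
    have h4 : (2:ℝ) • A x = A (x + C x) := by
      rw [map_sub, sub_eq_zero] at h1
      rw [map_add, ← h1, two_smul]
    rw [h2, map_add, map_smul, map_smul, hA1] at h4
    have h5 : A x = (1/2:ℝ) • (2:ℝ) • A x := by rw [smul_smul]; norm_num
    rw [h5, h4, hA0]
    simp only [inner_smul_right]
    have : inner ℝ (e 1 : Euc 3) (e 1 : Euc 3) = 1 := by
      have := e.orthonormal.1 1
      rw [real_inner_self_eq_norm_sq]
      have h : ‖(e 1 : Euc 3)‖ = 1 := this
      rw [h]; norm_num
    rw [this]
    module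
  have hb : C (u k - A (p k)) = u k - A (p k) := by
    have := hAp (σ k)
    rw [map_sub, hAC, hsym, hu]
    rw [map_sub] at this
    linear_combination (norm := module) -this
  refine ⟨![inner ℝ (e 0 : Euc 3) (u k - A (p k)), inner ℝ (e 1 : Euc 3) (u k - A (p k)), inner ℝ (e 1 : Euc 3) (A (e 0))], ?_⟩
  funext i
  have h1 := hAp i
  have h2 := hdec _ hb
  have h3 := hAx (p i)
  simp only [Matrix.cons_val, Pi.add_apply, Pi.smul_apply]
  rw [← h2, ← h3]
  rw [map_sub] at h1
  linear_combination (norm := module) -h1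

theorem trace_perm {E : Type*} [Fintype E] [DecidableEq E] (s : Equiv.Perm E) :
    LinearMap.trace ℝ (E → ℝ) (LinearMap.funLeft ℝ ℝ s) =
      ((Finset.univ.filter (fun e => s e = e)).card : ℝ) := by
  rw [LinearMap.trace_eq_matrix_trace ℝ (Pi.basisFun ℝ E), Matrix.trace]
  simp only [Matrix.diag_apply, LinearMap.toMatrix_apply, Pi.basisFun_apply, Pi.basisFun_repr,
    LinearMap.funLeft_apply, Pi.single_apply]
  simp

def theta {V : Type*} (C : Euc 3 ≃ₗᵢ[ℝ] Euc 3) (σ : Equiv.Perm V) :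
    (V → Euc 3) →ₗ[ℝ] (V → Euc 3) :=
  LinearMap.pi (fun i => C.toLinearEquiv.toLinearMap ∘ₗ LinearMap.proj (σ i))

theorem theta_apply {V : Type*} (C : Euc 3 ≃ₗᵢ[ℝ] Euc 3) (σ : Equiv.Perm V) (q : V → Euc 3) (i : V) :
    theta C σ q i = C (q (σ i)) := rfl

theorem trace_theta {V : Type*} [Fintype V] [DecidableEq V] (C : Euc 3 ≃ₗᵢ[ℝ] Euc 3) (σ : Equiv.Perm V) :
    LinearMap.trace ℝ (V → Euc 3) (theta C σ) =
      ((Finset.univ.filter (fun i => σ i = i)).card : ℝ)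
        * LinearMap.trace ℝ (Euc 3) C.toLinearEquiv.toLinearMap := by
  let b := (EuclideanSpace.basisFun (Fin 3) ℝ).toBasis
  rw [LinearMap.trace_eq_matrix_trace ℝ (Pi.basis (fun _ : V => b)),
    LinearMap.trace_eq_matrix_trace ℝ b, Matrix.trace, Matrix.trace, Fintype.sum_sigma]
  have : ∀ i : V, ∑ a : Fin 3, ((LinearMap.toMatrix (Pi.basis fun _ : V => b)
      (Pi.basis fun _ : V => b)) (theta C σ)).diag ⟨i, a⟩ =
      if σ i = i then ∑ a : Fin 3, ((LinearMap.toMatrix b b) C.toLinearEquiv.toLinearMap).diag a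
        else 0 := by
    intro i
    split_ifs with h
    · refine Finset.sum_congr rfl fun a _ => ?_
      simp only [Matrix.diag_apply, LinearMap.toMatrix_apply, Pi.basis_repr, Pi.basis_apply,
        theta_apply, h, Pi.single_eq_same]
      rfl
    · refine Finset.sum_eq_zero fun a _ => ?_
      simp only [Matrix.diag_apply, LinearMap.toMatrix_apply, Pi.basis_repr, Pi.basis_apply,
        theta_apply, Pi.single_eq_of_ne h, map_zero]
      rfl
  rw [Finset.sum_congr rfl fun i _ => this i, Finset.sum_ite]
  simp

theorem trace_C (C : Euc 3 ≃ₗᵢ[ℝ] Euc 3) (hC2 : ∀ v, C (C v) = v)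
    (hrefl : Module.finrank ℝ (fixedSpace C) = 2) :
    LinearMap.trace ℝ (Euc 3) C.toLinearEquiv.toLinearMap = 1 := by
  have h := finrank_symSub C.toLinearEquiv.toLinearMap hC2
  have h2 : symSub C.toLinearEquiv.toLinearMap = fixedSpace C := rfl
  rw [h2, hrefl] at h
  simp at h
  linarith

section graph
variable {V : Type*} [Fintype V] [DecidableEq V] (G : SimpleGraph V) [DecidableRel G.Adj]

/-- induced permutation of the edges -/
def edgePerm (σ : Equiv.Perm V) (hσ2 : ∀ i, σ (σ i) = i)
    (hσadj : ∀ i j : V, G.Adj (σ i) (σ j) ↔ G.Adj i j) : Equiv.Perm G.edgeFinset :=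
  Function.Involutive.toPerm (fun e => ⟨Sym2.map σ e.1, by
      obtain ⟨e, he⟩ := e
      induction e with
      | _ i j => simpa [hσadj] using he⟩) (by
    rintro ⟨e, he⟩
    apply Subtype.ext
    induction e with
      | _ i j => simp [hσ2])

/-- the bilinear rigidity form -/
def rig (p : V → Euc 3) : (V → Euc 3) →ₗ[ℝ] (G.edgeFinset → ℝ) :=
  LinearMap.pi (fun e => (innerₗ (Euc 3) (p (Quot.out e.1).1 - p (Quot.out e.1).2)) ∘ₗ
    (LinearMap.proj (R := ℝ) (φ := fun _ : V => Euc 3) (Quot.out e.1).1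
      - LinearMap.proj (R := ℝ) (φ := fun _ : V => Euc 3) (Quot.out e.1).2))

theorem rig_apply (p u : V → Euc 3) (i j : V) (h : s(i, j) ∈ G.edgeFinset) :
    rig G p u ⟨s(i, j), h⟩ = inner ℝ (p i - p j) (u i - u j) := by
  have h1 : s((Quot.out s(i, j)).1, (Quot.out s(i, j)).2) = s(i, j) := Quot.out_eq s(i, j)
  have h2 : rig G p u ⟨s(i, j), h⟩ = inner ℝ (p (Quot.out s(i, j)).1 - p (Quot.out s(i, j)).2)
    (u (Quot.out s(i, j)).1 - u (Quot.out s(i, j)).2) := rfl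
  rw [h2]
  rcases Sym2.eq_iff.1 h1 with ⟨h3, h4⟩ | ⟨h3, h4⟩
  · rw [h3, h4]
  · rw [h3, h4, ← neg_sub (p i), ← neg_sub (u i), inner_neg_neg]

theorem rig_theta (C : Euc 3 ≃ₗᵢ[ℝ] Euc 3) (hC2 : ∀ v, C (C v) = v)
    (σ : Equiv.Perm V) (hσ2 : ∀ i, σ (σ i) = i)
    (hσadj : ∀ i j : V, G.Adj (σ i) (σ j) ↔ G.Adj i j)
    (p : V → Euc 3) (hsym : ∀ i, C (p i) = p (σ i)) (u : V → Euc 3) :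
    rig G p (theta C σ u) = LinearMap.funLeft ℝ ℝ (edgePerm G σ hσ2 hσadj) (rig G p u) := by
  funext ⟨e, he⟩
  induction e with
  | _ i j =>
    have h : (edgePerm G σ hσ2 hσadj) ⟨s(i, j), he⟩ =
      ⟨s(σ i, σ j), by simpa [hσadj] using he⟩ := rfl
    rw [LinearMap.funLeft_apply, h, rig_apply, rig_apply, theta_apply, theta_apply, ← map_sub,
      ← C.inner_map_map, hC2, map_sub, hsym, hsym]

theorem rig_strict (p : V → Euc 3) :
    HasStrictFDerivAt (fun q => rig G q q) ((2:ℝ) • LinearMap.toContinuousLinearMap (rig G p)) p := by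
  rw [hasStrictFDerivAt_pi']
  rintro ⟨e, he⟩
  induction e with
  | _ i j =>
    simp only [rig_apply]
    have hi : HasStrictFDerivAt (fun q : V → Euc 3 => q i - q j)
      (ContinuousLinearMap.proj (R := ℝ) (φ := fun _ : V => Euc 3) i
        - ContinuousLinearMap.proj (R := ℝ) (φ := fun _ : V => Euc 3) j) p :=
      (ContinuousLinearMap.proj (R := ℝ) (φ := fun _ : V => Euc 3) i
        - ContinuousLinearMap.proj (R := ℝ) (φ := fun _ : V => Euc 3) j).hasStrictFDerivAt
    refine (hi.inner ℝ hi).congr_fderiv ?_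
    ext u
    have := rig_apply G p u i j he
    simp only [ContinuousLinearMap.comp_apply, ContinuousLinearMap.proj_apply, 
      smul_apply, Pi.smul_apply, LinearMap.coe_toContinuousLinearMap', this]
    simp [real_inner_comm]
    simp [inner_sub_left, inner_sub_right]
    ring

theorem stress_of (p : V → Euc 3) (ω : Sym2 V → ℝ)
    (h : ∀ u, ∑ e : G.edgeFinset, ω e.1 * rig G p u e = 0) (i : V) :
    ∑ j ∈ G.neighborFinset i, ω s(i, j) • (p i - p j) = 0 := by
  have key : ∀ v : Euc 3, inner ℝ (∑ j ∈ G.neighborFinset i, ω s(i, j) • (p i - p j)) v = 0 := by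
    intro v
    rw [← h (Pi.single i v), sum_inner]
    symm
    have h0 : ∀ e : G.edgeFinset, e ∉ (G.neighborFinset i).attach.image
        (fun j => (⟨s(i, j.1), by
          simpa using (G.mem_neighborFinset i j.1).1 j.2⟩ : G.edgeFinset)) → 
        ω e.1 * rig G p (Pi.single i v) e = 0 := by
      rintro ⟨e, he⟩
      induction e with
      | _ a b =>
        intro hn
        rw [rig_apply]
        have ha : a ≠ i := by
          rintro rfl
          exact hn (Finset.mem_image.2 ⟨⟨b, by simpa using he⟩, Finset.mem_attach _ _, rfl⟩)
        have hb : b ≠ i := by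
          rintro rfl
          exact hn (Finset.mem_image.2 ⟨⟨a, by simpa [G.adj_comm] using he⟩, Finset.mem_attach _ _,
            Subtype.ext Sym2.eq_swap⟩)
        simp [ha, hb]
    rw [← Finset.sum_subset (Finset.subset_univ _) (fun e _ he => h0 e he),
      Finset.sum_image, ← Finset.sum_attach (G.neighborFinset i)]
    · refine Finset.sum_congr rfl fun j _ => ?_
      have hj : j.1 ≠ i := by
        have := j.2
        rw [SimpleGraph.mem_neighborFinset] at this
        exact this.ne'
      rw [rig_apply]
      simp [hj, inner_smul_left]
    · intro a _ b _ hab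
      have := congrArg Subtype.val hab
      simp only [Sym2.congr_right] at this
      exact Subtype.ext this
  exact inner_self_eq_zero.1 (key _)
end graph

/-- Theorem 6.7, mirror symmetry in 3-space: `s ∈ O(3)` a
reflection (orthogonal involution with 2-dimensional fixed subspace),
`S = {I, s}`, `Φ(s) = σ` with `j_s > b_s` (more fixed vertices than fixed
edges), `|E| = 3|V| - 6`; then a symmetric framework spanning `ℝ³` with no
nonzero fully symmetric self-stress has a symmetry-preserving finite flex. -/
theorem stmt_7 {V : Type*} [Fintype V] [DecidableEq V]
    (G : SimpleGraph V) [DecidableRel G.Adj]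
    (hcount : G.edgeFinset.card + 6 = 3 * Fintype.card V)
    (C : Euc 3 ≃ₗᵢ[ℝ] Euc 3) (hC2 : ∀ v, C (C v) = v)
    (hrefl : Module.finrank ℝ (fixedSpace C) = 2)
    (σ : Equiv.Perm V) (hσ2 : σ * σ = 1)
    (hσadj : ∀ i j : V, G.Adj (σ i) (σ j) ↔ G.Adj i j)
    (hjb : (G.edgeFinset.filter (fun e => Sym2.map σ e = e)).card <
      (Finset.univ.filter (fun i : V => σ i = i)).card)
    (p : V → Euc 3) (hp : Function.Injective p)
    (hsym : ∀ i, C (p i) = p (σ i))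
    (hspan : affineSpan ℝ (Set.range p) = ⊤)
    (hnostress : ∀ ω : Sym2 V → ℝ,
      (∀ i : V, ∑ j ∈ G.neighborFinset i, ω s(i, j) • (p i - p j) = 0) →
      (∀ e ∈ G.edgeSet, ω (Sym2.map σ e) = ω e) →
      ∀ e ∈ G.edgeSet, ω e = 0) :
    ∃ P : ℝ → V → Euc 3,
      ContinuousOn P (Set.Icc 0 1) ∧
      P 0 = p ∧
      (∀ t ∈ Set.Icc (0:ℝ) 1, ∀ i j : V, G.Adj i j → ‖P t i - P t j‖ = ‖p i - p j‖) ∧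
      (∃ k l : V, ∀ t ∈ Set.Ioc (0:ℝ) 1, ‖P t k - P t l‖ ≠ ‖p k - p l‖) ∧
      (∀ t ∈ Set.Icc (0:ℝ) 1, ∀ i, C (P t i) = P t (σ i)) := by
  have hσ : ∀ i, σ (σ i) = i := fun i => by
    have := congrArg (fun f : Equiv.Perm V => f i) hσ2
    simpa using this
  set θ := theta C σ with hθdef
  have hθ : ∀ x, θ (θ x) = x := by
    intro x; funext i
    rw [theta_apply, theta_apply, hC2, hσ]
  set τ := LinearMap.funLeft ℝ ℝ (edgePerm G σ hσ hσadj) with hτdef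
  have hττ : ∀ e, edgePerm G σ hσ hσadj (edgePerm G σ hσ hσadj e) = e :=
    Function.Involutive.toPerm_involutive _
  have hτ : ∀ x, τ (τ x) = x := by
    intro x; funext e
    simp only [hτdef, LinearMap.funLeft_apply, hττ]
  have hrθ : ∀ q, θ q = q → ∀ u, rig G q (θ u) = τ (rig G q u) := by
    intro q hq u
    refine rig_theta G C hC2 σ hσ hσadj q (fun i => ?_) u
    have := congrFun hq (σ i)
    rwa [hθdef, theta_apply, hσ] at this
  have hpθ : θ p = p := by
    funext i
    rw [hθdef, theta_apply, hsym, hσ]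
  let U := symSub θ
  let W := symSub τ
  let π : (G.edgeFinset → ℝ) →ₗ[ℝ] W := symProj τ hτ
  let L : U →ₗ[ℝ] W := π ∘ₗ rig G p ∘ₗ U.subtype
  have hπc : ∀ x, ((π x : W) : G.edgeFinset → ℝ) = (1/2 : ℝ) • (x + τ x) := symProj_coe τ hτ
  have hπs : ∀ w : W, π (w : G.edgeFinset → ℝ) = w := symProj_self τ hτ
  have hπτ : ∀ x, π (τ x) = π x := by
    intro x
    apply Subtype.ext
    rw [hπc, hπc, hτ, add_comm]
  -- surjectivity
  have hLs : LinearMap.range L = ⊤ := by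
    by_contra hne
    obtain ⟨φ, hφ0, hφ⟩ := (LinearMap.range L).exists_le_ker_of_lt_top (lt_top_iff_ne_top.2 hne)
    let ψ : (G.edgeFinset → ℝ) →ₗ[ℝ] ℝ := φ ∘ₗ π
    have hψ : ∀ u, ψ (rig G p u) = 0 := by
      intro u
      have h1 : L (symProj θ hθ u) = π (rig G p u) := by
        simp only [L, LinearMap.comp_apply, Submodule.subtype_apply, symProj_coe, map_smul, map_add,
          hrθ p hpθ, hπτ]
        rw [← two_smul ℝ, smul_smul]; norm_num
      have h2 : L (symProj θ hθ u) ∈ LinearMap.ker φ := hφ ⟨_, rfl⟩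
      rw [h1] at h2
      exact h2
    let ω : Sym2 V → ℝ := fun e => if h : e ∈ G.edgeFinset then ψ (Pi.single ⟨e, h⟩ 1) else 0
    have hω : ∀ e : G.edgeFinset, ω e.1 = ψ (Pi.single e 1) := by
      intro e
      simp only [ω, dif_pos e.2]
    have hψω : ∀ x, ψ x = ∑ e : G.edgeFinset, ω e.1 * x e := by
      intro x
      rw [LinearMap.pi_apply_eq_sum_univ ψ x]
      refine Finset.sum_congr rfl fun e _ => ?_
      rw [hω, smul_eq_mul, mul_comm]
      congr 2
      funext i
      simp [Pi.single_apply, eq_comm]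
    have hωs : ∀ e : G.edgeFinset, ω (Sym2.map σ e.1) = ω e.1 := by
      intro e
      have h1 : Sym2.map σ e.1 = (edgePerm G σ hσ hσadj e).1 := rfl
      have h2 : (Pi.single e 1 : G.edgeFinset → ℝ) =
          τ (Pi.single (edgePerm G σ hσ hσadj e) 1) := by
        funext i
        simp [hτdef, LinearMap.funLeft_apply, Pi.single_apply]
      rw [h1, hω, hω, h2]
      simp only [ψ, LinearMap.comp_apply, hπτ]
    have h0 := hnostress ω (stress_of G p ω (fun u => by rw [← hψω, hψ]))
      (fun e he => hωs ⟨e, by simpa using he⟩)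
    apply hφ0
    ext w
    have h1 : φ w = ψ w := by
      simp only [ψ, LinearMap.comp_apply, hπs]
    rw [h1, hψω]
    exact Finset.sum_eq_zero fun e _ => by rw [h0 e.1 (SimpleGraph.mem_edgeFinset.1 e.2), zero_mul]
  -- dimensions
  have hdU : 2 * (Module.finrank ℝ U : ℝ) = 3 * Fintype.card V +
      ((Finset.univ.filter (fun i : V => σ i = i)).card : ℝ) := by
    rw [finrank_symSub θ hθ, hθdef, trace_theta, trace_C C hC2 hrefl, Module.finrank_pi_fintype]
    simp [mul_comm]
  have hdW : 2 * (Module.finrank ℝ W : ℝ) = G.edgeFinset.card +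
      ((G.edgeFinset.filter (fun e => Sym2.map σ e = e)).card : ℝ) := by
    rw [finrank_symSub τ hτ, hτdef, trace_perm]
    congr 1
    · rw [Module.finrank_fintype_fun_eq_card, Fintype.card_coe]
    · norm_cast
      refine Finset.card_bij (fun e _ => e.1) ?_ ?_ ?_
      · intro e he
        refine Finset.mem_filter.2 ⟨e.2, ?_⟩
        exact congrArg Subtype.val (Finset.mem_filter.1 he).2
      · intro a _ b _ h
        exact Subtype.ext h
      · intro e he
        have he' := Finset.mem_filter.1 he
        exact ⟨⟨e, he'.1⟩, Finset.mem_filter.2 ⟨Finset.mem_univ _, Subtype.ext he'.2⟩, rfl⟩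
  have hker : 4 ≤ Module.finrank ℝ (LinearMap.ker L) := by
    have h1 := L.finrank_range_add_finrank_ker
    rw [hLs, finrank_top] at h1
    have h2 : 2 * Module.finrank ℝ U = 3 * Fintype.card V +
      (Finset.univ.filter (fun i : V => σ i = i)).card := by exact_mod_cast hdU
    have h3 : 2 * Module.finrank ℝ W = G.edgeFinset.card +
      (G.edgeFinset.filter (fun e => Sym2.map σ e = e)).card := by exact_mod_cast hdW
    omega
  -- a nontrivial infinitesimal motion
  have hex : ∃ u : U, L u = 0 ∧ ∃ k l, inner ℝ (p k - p l) (u.1 k - u.1 l) ≠ 0 := by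
    by_contra hno
    push Not at hno
    let e : OrthonormalBasis (Fin 2) ℝ (fixedSpace C) :=
      (stdOrthonormalBasis ℝ (fixedSpace C)).reindex (finCongr hrefl)
    let w : Fin 3 → (V → Euc 3) := ![fun _ => (e 0 : Euc 3), fun _ => (e 1 : Euc 3),
      fun i => inner ℝ (e 0 : Euc 3) (p i) • (e 1 : Euc 3)
          - inner ℝ (e 1 : Euc 3) (p i) • (e 0 : Euc 3)]
    have hle : (LinearMap.ker L).map U.subtype ≤ Submodule.span ℝ (Set.range w) := by
      rintro _ ⟨u, hu, rfl⟩
      have husym : ∀ i, C (u.1 i) = u.1 (σ i) := by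
        intro i
        have := congrFun (mem_symSub.1 u.2) (σ i)
        rwa [hθdef, theta_apply, hσ] at this
      obtain ⟨c, hc⟩ := triv_mem C hC2 e σ p hsym hspan u.1 husym (hno u hu)
      rw [Submodule.mem_span_range_iff_exists_fun]
      refine ⟨c, ?_⟩
      rw [Fin.sum_univ_three]
      exact hc.symm
    have h1 := Submodule.finrank_mono hle
    have h2 : Module.finrank ℝ ((LinearMap.ker L).map U.subtype) = Module.finrank ℝ (LinearMap.ker L) :=
      Submodule.finrank_map_subtype_eq _ _
    have h3 := finrank_range_le_card (R := ℝ) w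
    rw [Set.finrank, Fintype.card_fin] at h3
    omega
  obtain ⟨u, hLu, k, l, hkl⟩ := hex
  -- the curve
  let F : U → W := fun q => π (rig G q.1 q.1)
  let p0 : U := ⟨p, mem_symSub.2 hpθ⟩
  have hF : HasStrictFDerivAt F ((2:ℝ) • LinearMap.toContinuousLinearMap L) p0 := by
    have h1 : HasStrictFDerivAt (fun q : U => q.1) U.subtypeL p0 := U.subtypeL.hasStrictFDerivAt
    have h2 := (rig_strict G p).comp p0 h1
    have h3 := (LinearMap.toContinuousLinearMap π).hasStrictFDerivAt.comp p0 h2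
    refine h3.congr_fderiv ?_
    ext1 v
    simp [L]
  obtain ⟨γ, hγ0, hγd, ε, hε, hγc, hγF⟩ := exists_curve F _ p0 hF (by
    rw [LinearMap.range_eq_top] at hLs ⊢
    intro y
    obtain ⟨x, hx⟩ := hLs ((1/2:ℝ) • y)
    refine ⟨x, ?_⟩
    have : (2:ℝ) • L x = y := by rw [hx, smul_smul]; norm_num
    exact this) u (by
      have : (2:ℝ) • L u = 0 := by rw [hLu, smul_zero]
      exact this)
  have hdist : HasDerivAt (fun t => inner ℝ ((γ t).1 k - (γ t).1 l) ((γ t).1 k - (γ t).1 l))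
      (2 * inner ℝ (p k - p l) (u.1 k - u.1 l)) 0 := by
    have h1 : HasDerivAt (fun t => (γ t).1) u.1 0 :=
      U.subtypeL.hasFDerivAt.comp_hasDerivAt (0:ℝ) hγd
    rw [hasDerivAt_pi] at h1
    have h2 := (h1 k).sub (h1 l)
    have h3 := h2.inner ℝ h2
    refine h3.congr_deriv ?_
    simp only [Pi.sub_apply, hγ0]
    rw [real_inner_comm (p k - p l)]
    ring
  have hev := hdist.eventually_ne (c := inner ℝ (p k - p l) (p k - p l)) (by simpa using hkl)
  rw [eventually_nhdsWithin_iff] at hev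
  obtain ⟨δ, hδ, hδ'⟩ := Metric.eventually_nhds_iff.1 hev
  let η := min ε (δ/2)
  have hη : 0 < η := lt_min hε (by positivity)
  have hηt : ∀ t ∈ Set.Icc (0:ℝ) 1, η * t ∈ Set.Icc 0 ε := fun t ht =>
    ⟨mul_nonneg hη.le ht.1, (mul_le_of_le_one_right hη.le ht.2).trans (min_le_left _ _)⟩
  refine ⟨fun t => (γ (η * t)).1, ?_, ?_, ?_, ⟨k, l, ?_⟩, ?_⟩
  · exact continuous_subtype_val.comp_continuousOn (hγc.comp (by fun_prop) hηt)
  · simp [hγ0, p0]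
  · intro t ht i j hij
    have h1 := congrArg Subtype.val (hγF _ (hηt t ht))
    have hs : ∀ q : U, ((π (rig G q.1 q.1) : W) : G.edgeFinset → ℝ) = rig G q.1 q.1 := by
      intro q
      have hq := mem_symSub.1 q.2
      have := hrθ q.1 hq q.1
      rw [hq] at this
      rw [hπc, ← this, ← two_smul ℝ, smul_smul]; norm_num
    simp only [F, hs] at h1
    have h2 := congrFun h1 ⟨s(i, j), by simpa using hij⟩
    rw [rig_apply, rig_apply, real_inner_self_eq_norm_sq, real_inner_self_eq_norm_sq] at h2
    exact (sq_eq_sq₀ (norm_nonneg _) (norm_nonneg _)).1 h2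
  · intro t ht heq
    have hpos : 0 < η * t := mul_pos hη ht.1
    refine hδ' (y := η * t) ?_ ?_ ?_
    · rw [Real.dist_eq, sub_zero, abs_of_pos hpos]
      have := mul_le_of_le_one_right hη.le ht.2
      have := min_le_right ε (δ/2)
      simp only [η] at *
      linarith
    · simpa using hpos.ne'
    · rw [real_inner_self_eq_norm_sq, real_inner_self_eq_norm_sq, heq]
  · intro t _ i
    have := congrFun (mem_symSub.1 (γ (η * t)).2) (σ i)
    rwa [hθdef, theta_apply, hσ] at this
end
end

section
/- (Theorem 6.8(ii), half-turn symmetry in dimension d > 4.) Let d > 4, let G be a finite simple graph with |E| = d|V| − (d+1 choose 2), let C ∈ O(d) be a half-turn (an orthogonal involution of ℝ^d whose fixed subspace has dimension d − 2), S = {I, C}, and let Φ : S → Aut(G) be a homomorphism with j_C > b_C/(d−4) + (d(d−7)+8)/(2(d−4)), where j_C is the number of vertices fixed by Φ(C) and b_C the number of edges fixed setwise by Φ(C). Let (G,p) be an S-symmetric framework of type Φ in ℝ^d whose points p_i affinely span ℝ^d and which admits no nonzero fully (S,Φ)-symmetric self-stress (this last hypothesis playing the role of the paper's '(S,Φ)-generic'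 assumption, as licensed by Remark 6.2). Then (G,p) has a finite flex preserving the symmetry throughout the path. -/
open scoped Classical

noncomputable section

lemma aux_fix_finrank {W : Type*} [AddCommGroup W] [Module ℝ W] [FiniteDimensional ℝ W]
    (T : W →ₗ[ℝ] W) (hT : ∀ w, T (T w) = w) :
    2 * (Module.finrank ℝ (LinearMap.ker (T - LinearMap.id)) : ℝ)
      = Module.finrank ℝ W + LinearMap.trace ℝ W T := by
  have h : LinearMap.IsProj (LinearMap.ker (T - LinearMap.id))
      ((1/2 : ℝ) • (LinearMap.id + T)) := by
    constructor
    · intro x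
      simp [hT, add_comm]
    · intro x hx
      have hx' : T x = x := by simpa [sub_eq_zero] using hx
      simp only [LinearMap.smul_apply, LinearMap.add_apply, LinearMap.id_apply, hx']
      rw [← two_smul ℝ x, smul_smul]; norm_num
  have := h.trace
  rw [← this, map_smul, map_add, LinearMap.trace_id]
  simp

lemma aux_choose (m : ℕ) : Fintype.card (Σ j : Fin m, Fin j) = m.choose 2 := by
  rw [Fintype.card_sigma]
  simp only [Fintype.card_fin]
  rw [Fin.sum_univ_eq_sum_range (fun i => i) m, Finset.sum_range_id, Nat.choose_two_right]

/-- upper triangular coordinates -/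
def auxCoord {d : ℕ} (U : Submodule ℝ (Euc d)) :
    (Euc d →ₗ[ℝ] Euc d) →ₗ[ℝ] ((Σ j : Fin (Module.finrank ℝ U), Fin j) → ℝ) where
  toFun A := fun x => inner ℝ
    ((stdOrthonormalBasis ℝ U ⟨x.2.1, x.2.2.trans x.1.2⟩ : U) : Euc d)
    (A ((stdOrthonormalBasis ℝ U x.1 : U) : Euc d))
  map_add' A B := by ext x; simp [inner_add_right]
  map_smul' c A := by ext x; simp [inner_smul_right]

lemma auxCoord_zero {d : ℕ} (U : Submodule ℝ (Euc d)) (A : Euc d →ₗ[ℝ] Euc d)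
    (hA : ∀ x y, inner ℝ (A x) y = - inner ℝ x (A y)) (hU : ∀ x ∈ U, A x ∈ U)
    (h0 : auxCoord U A = 0) : ∀ x ∈ U, A x = 0 := by
  set b := stdOrthonormalBasis ℝ U with hb
  have key : ∀ i j, inner ℝ ((b i : U) : Euc d) (A (b j : U)) = 0 := by
    have lt : ∀ i j, i < j → inner ℝ ((b i : U) : Euc d) (A (b j : U)) = 0 := by
      intro i j hij
      exact congrFun h0 ⟨j, ⟨i.1, hij⟩⟩
    intro i j
    rcases lt_trichotomy i j with h | h | h
    · exact lt i j h
    · subst h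
      have := hA (b i : U) (b i : U)
      rw [real_inner_comm] at this
      linarith
    · have := hA (b i : U) (b j : U)
      rw [real_inner_comm, lt j i h] at this
      linarith
  have key2 : ∀ j, A (b j : U) = 0 := by
    intro j
    have : (⟨A (b j : U), hU _ (b j).2⟩ : U) = 0 := by
      apply InnerProductSpace.ext_inner_left_basis b.toBasis
      intro i
      simpa using key i j
    simpa using congrArg Subtype.val this
  have : A ∘ₗ U.subtype = 0 := by
    apply b.toBasis.ext
    intro j
    simpa using key2 j
  intro x hx
  exact congrArg (fun f => f ⟨x, hx⟩) this

/-- skew maps commuting with `C` -/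
def auxSkew {d : ℕ} (C : Euc d ≃ₗᵢ[ℝ] Euc d) : Submodule ℝ (Euc d →ₗ[ℝ] Euc d) where
  carrier := {A | (∀ x y, inner ℝ (A x) y = - inner ℝ x (A y)) ∧ ∀ x, A (C x) = C (A x)}
  add_mem' := by
    rintro A B ⟨h1, h2⟩ ⟨h3, h4⟩
    refine ⟨fun x y => ?_, fun x => ?_⟩
    · simp only [LinearMap.add_apply, inner_add_left, inner_add_right, h1, h3]; ring
    · simp [h2, h4]
  zero_mem' := by simp
  smul_mem' := by
    rintro c A ⟨h1, h2⟩
    refine ⟨fun x y => ?_, fun x => ?_⟩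
    · simp [inner_smul_left, inner_smul_right, h1]
    · simp [h2]

lemma auxSkew_finrank {d : ℕ} (hd : 4 < d) (C : Euc d ≃ₗᵢ[ℝ] Euc d)
    (hhalf : Module.finrank ℝ (fixedSpace C) = d - 2) :
    Module.finrank ℝ (auxSkew C) ≤ (d - 2).choose 2 + 1 := by
  have hN : Module.finrank ℝ (fixedSpace C)ᗮ = 2 := by
    have := (fixedSpace C).finrank_add_finrank_orthogonal
    rw [hhalf, finrank_euclideanSpace_fin] at this
    omega
  let Ψ := ((auxCoord (fixedSpace C)).prod (auxCoord (fixedSpace C)ᗮ)) ∘ₗ (auxSkew C).subtype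
  have hinj : Function.Injective Ψ := by
    rw [← LinearMap.ker_eq_bot, LinearMap.ker_eq_bot']
    rintro ⟨A, hA1, hA2⟩ h
    have h1 : auxCoord (fixedSpace C) A = 0 := congrArg Prod.fst h
    have h2 : auxCoord (fixedSpace C)ᗮ A = 0 := congrArg Prod.snd h
    have hF : ∀ x ∈ fixedSpace C, A x ∈ fixedSpace C := by
      intro x hx
      have hx' : C x = x := by simpa [fixedSpace, sub_eq_zero] using hx
      have : C (A x) = A x := by rw [← hA2, hx']
      simpa [fixedSpace, sub_eq_zero] using this
    have hF' : ∀ x ∈ (fixedSpace C)ᗮ, A x ∈ (fixedSpace C)ᗮ := by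
      intro y hy
      rw [Submodule.mem_orthogonal] at hy ⊢
      intro x hx
      have := hA1 x y
      rw [hy _ (hF x hx)] at this
      linarith
    have z1 := auxCoord_zero _ A hA1 hF h1
    have z2 := auxCoord_zero _ A hA1 hF' h2
    ext1
    show A = 0
    ext1 x
    have hx : x ∈ fixedSpace C ⊔ (fixedSpace C)ᗮ := by
      rw [Submodule.sup_orthogonal_of_hasOrthogonalProjection]; trivial
    obtain ⟨y, hy, z, hz, rfl⟩ := Submodule.mem_sup.1 hx
    rw [map_add, z1 y hy, z2 z hz]; simp
  have := LinearMap.finrank_le_finrank_of_injective hinj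
  rw [Module.finrank_prod, Module.finrank_fintype_fun_eq_card, Module.finrank_fintype_fun_eq_card,
    aux_choose, aux_choose, hhalf, hN] at this
  simpa using this

/-- the submodule of symmetric configurations -/
def auxT {d : ℕ} {V : Type*} (C : Euc d ≃ₗᵢ[ℝ] Euc d) (σ : Equiv.Perm V) :
    (V → Euc d) →ₗ[ℝ] (V → Euc d) where
  toFun q := fun i => C (q (σ i))
  map_add' q r := by ext; simp
  map_smul' q r := by ext; simp

lemma auxT_trace {d : ℕ} {V : Type*} [Fintype V] [DecidableEq V] (C : Euc d ≃ₗᵢ[ℝ] Euc d)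
    (σ : Equiv.Perm V) :
    LinearMap.trace ℝ _ (auxT C σ) = (Finset.univ.filter (fun i : V => σ i = i)).card *
      LinearMap.trace ℝ _ C.toLinearEquiv.toLinearMap := by
  let b := (EuclideanSpace.basisFun (Fin d) ℝ).toBasis
  rw [LinearMap.trace_eq_matrix_trace ℝ (Pi.basis (fun _ : V => b)),
    LinearMap.trace_eq_matrix_trace ℝ b]
  simp only [Matrix.trace, Matrix.diag, LinearMap.toMatrix_apply, Fintype.sum_sigma]
  rw [Finset.cast_card, Finset.sum_mul, Finset.sum_filter]
  refine Finset.sum_congr rfl fun i _ => ?_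
  split_ifs with h
  · simp [auxT, h, Pi.basis_apply]
  · have : ∀ k, (Pi.single i (b k) : V → Euc d) (σ i) = 0 := fun k => by simp [h]
    simp [auxT, Pi.basis_apply, this]

lemma auxX_finrank {d : ℕ} (hd : 4 < d) {V : Type*} [Fintype V] [DecidableEq V]
    (C : Euc d ≃ₗᵢ[ℝ] Euc d)
    (σ : Equiv.Perm V) (hC2 : ∀ v, C (C v) = v)
    (hhalf : Module.finrank ℝ (fixedSpace C) = d - 2) (hσ : ∀ i, σ (σ i) = i) :
    2 * (Module.finrank ℝ (LinearMap.ker (auxT C σ - LinearMap.id)) : ℝ) =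
      d * Fintype.card V + (d - 4) * (Finset.univ.filter (fun i : V => σ i = i)).card := by
  have h1 := aux_fix_finrank C.toLinearEquiv.toLinearMap hC2
  change 2 * (Module.finrank ℝ (fixedSpace C) : ℝ) = _ at h1
  rw [hhalf, finrank_euclideanSpace_fin, Nat.cast_sub (by omega)] at h1
  rw [aux_fix_finrank (auxT C σ) (by intro w; ext1 i; simp [auxT, hσ, hC2]), auxT_trace,
    Module.finrank_pi_fintype]
  simp only [finrank_euclideanSpace_fin, Finset.sum_const, Finset.card_univ, smul_eq_mul]
  push_cast at h1 ⊢
  have : LinearMap.trace ℝ _ C.toLinearEquiv.toLinearMap = (d:ℝ) - 4 := by linarith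
  rw [this]; ring

/-- permutation operator on edge functions -/
def auxR {E : Type*} (τ : Equiv.Perm E) :
    EuclideanSpace ℝ E →ₗ[ℝ] EuclideanSpace ℝ E where
  toFun q := WithLp.toLp 2 fun i => q (τ i)
  map_add' q r := by ext; simp
  map_smul' q r := by ext; simp

lemma auxY_finrank {E : Type*} [Fintype E] [DecidableEq E]
    (τ : Equiv.Perm E) (hτ : ∀ i, τ (τ i) = i) :
    2 * (Module.finrank ℝ (LinearMap.ker (auxR τ - LinearMap.id)) : ℝ) =
      Fintype.card E + (Finset.univ.filter (fun i : E => τ i = i)).card := by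
  rw [aux_fix_finrank (auxR τ) (by intro w; ext1 i; simp [auxR, hτ]), finrank_euclideanSpace,
    LinearMap.trace_eq_matrix_trace ℝ (EuclideanSpace.basisFun E ℝ).toBasis]
  congr 1
  simp only [Matrix.trace, Matrix.diag, LinearMap.toMatrix_apply]
  rw [Finset.cast_card, Finset.sum_filter]
  refine Finset.sum_congr rfl fun i _ => ?_
  simp [auxR]

lemma aux_curve {X Z : Type*} [NormedAddCommGroup X] [NormedSpace ℝ X] [FiniteDimensional ℝ X]
    [NormedAddCommGroup Z] [InnerProductSpace ℝ Z] [FiniteDimensional ℝ Z]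
    (f : X → Z) (f' : X →L[ℝ] Z) (a : X) (hf : HasStrictFDerivAt f f' a)
    (hr : ∀ x, f x ∈ LinearMap.range (f' : X →ₗ[ℝ] Z)) (v : X) (hv : f' v = 0) :
    ∃ γ : ℝ → X, γ 0 = a ∧ HasDerivAt γ v 0 ∧ ∃ ε > 0, ContinuousOn γ (Set.Icc 0 ε) ∧
      ∀ t ∈ Set.Icc 0 ε, f (γ t) = f a := by
  have : CompleteSpace X := FiniteDimensional.complete ℝ X
  let R : Submodule ℝ Z := LinearMap.range (f' : X →ₗ[ℝ] Z)
  let π : Z →L[ℝ] R := R.orthogonalProjectionOnto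
  have hπ : ∀ z : R, π z = z := fun z => R.orthogonalProjectionOnto_mem_subspace_eq_self z
  have hg : HasStrictFDerivAt (fun x => π (f x)) (π.comp f') a :=
    π.hasStrictFDerivAt.comp a hf
  have hsurj : (π.comp f').range = ⊤ := by
    rw [eq_top_iff]
    rintro ⟨z, x, rfl⟩ -
    exact ⟨x, hπ ⟨f' x, x, rfl⟩⟩
  have hvk : v ∈ (π.comp f').ker := by simp [hv]
  let ψ := hg.implicitFunction _ _ hsurj (π (f a))
  have hψ : HasStrictFDerivAt ψ (π.comp f').ker.subtypeL 0 := hg.to_implicitFunction hsurj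
  have hψ0 : ψ 0 = a := hg.implicitFunction_apply_image hsurj
  let w : (π.comp f').ker := ⟨v, hvk⟩
  obtain ⟨K, s, hs, hK⟩ := hψ.exists_lipschitzOnWith
  have hl : HasDerivAt (fun t : ℝ => t • w) w 0 := by
    have := (hasDerivAt_id (0:ℝ)).smul_const w
    rwa [one_smul] at this
  have hl0 : Filter.Tendsto (fun t : ℝ => t • w) (nhds 0) (nhds 0) := by
    have := hl.continuousAt.tendsto
    rwa [zero_smul] at this
  have hev : ∀ᶠ y in nhds (0 : (π.comp f').ker), π (f (ψ y)) = π (f a) := by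
    have := hg.map_implicitFunction_eq hsurj
    have hc : Filter.Tendsto (fun y : (π.comp f').ker => (π (f a), y)) (nhds 0)
        (nhds (π (f a), 0)) := (Continuous.prodMk_right _).tendsto _
    exact hc.eventually this
  have hev2 := hl0.eventually (hev.and hs)
  obtain ⟨ε, hε, hball⟩ := Metric.eventually_nhds_iff.1 hev2
  have hin : ∀ t ∈ Set.Icc 0 (ε/2), dist t 0 < ε := by
    rintro t ⟨h1, h2⟩
    rw [Real.dist_eq, sub_zero, abs_of_nonneg h1]; linarith
  refine ⟨fun t => ψ (t • w), by simp only [zero_smul, hψ0], ?_, ε/2, by positivity, ?_, ?_⟩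
  · have h1 : HasFDerivAt ψ (π.comp f').ker.subtypeL ((0:ℝ) • w) := by
      rw [zero_smul]; exact hψ.hasFDerivAt
    exact h1.comp_hasDerivAt (0:ℝ) hl
  · refine hK.continuousOn.comp (by fun_prop) ?_
    intro t ht
    exact (hball (hin t ht)).2
  · intro t ht
    have := (hball (hin t ht)).1
    have h2 := congrArg Subtype.val this
    have e1 := congrArg Subtype.val (hπ ⟨f (ψ (t • w)), hr _⟩)
    have e2 := congrArg Subtype.val (hπ ⟨f a, hr _⟩)
    simp only at e1 e2
    rw [← e1, ← e2, h2]

lemma aux_triv {d : ℕ} {V : Type*} [Fintype V] (C : Euc d ≃ₗᵢ[ℝ] Euc d)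
    (σ : Equiv.Perm V) (p v : V → Euc d) (i0 : V)
    (hsym : ∀ i, C (p i) = p (σ i)) (hspan : affineSpan ℝ (Set.range p) = ⊤)
    (hv : ∀ i, C (v i) = v (σ i))
    (h : ∀ i j, inner ℝ (p i - p j) (v i - v j) = 0) :
    ∃ A ∈ auxSkew C, ∃ t ∈ fixedSpace C, ∀ i, v i = A (p i) + t := by
  let L1 := Fintype.linearCombination ℝ (fun i => p i - p i0)
  let L2 := Fintype.linearCombination ℝ (fun i => v i - v i0)
  have htop : Submodule.span ℝ (Set.range fun i => p i - p i0) = ⊤ := by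
    have := AffineSubspace.vectorSpan_eq_top_of_affineSpan_eq_top ℝ _ _ hspan
    rwa [vectorSpan_range_eq_span_range_vsub_right ℝ p i0] at this
  have hL1 : LinearMap.range L1 = ⊤ := by
    rw [Fintype.range_linearCombination, htop]
  have hpol : ∀ i j, inner ℝ (p i - p i0) (v j - v i0) = - inner ℝ (p j - p i0) (v i - v i0) := by
    intro i j
    have h1 := h i j
    have h2 := h i i0
    have h3 := h j i0
    have e1 : p i - p j = (p i - p i0) - (p j - p i0) := by abel
    have e2 : v i - v j = (v i - v i0) - (v j - v i0) := by abel
    rw [e1, e2, inner_sub_left, inner_sub_right (p i - p i0) (v i - v i0),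
      inner_sub_right (p j - p i0) (v i - v i0)] at h1
    linarith
  have hpol2 : ∀ c e, inner ℝ (L1 c) (L2 e) = - inner ℝ (L1 e) (L2 c) := by
    intro c e
    simp only [L1, L2, Fintype.linearCombination_apply, sum_inner, inner_sum, inner_smul_left,
      inner_smul_right, Finset.mul_sum]
    rw [Finset.sum_comm, ← Finset.sum_neg_distrib]
    refine Finset.sum_congr rfl fun i _ => ?_
    rw [← Finset.sum_neg_distrib]
    refine Finset.sum_congr rfl fun j _ => ?_
    rw [hpol]; simp; ring
  have hker : ∀ c, L1 c = 0 → L2 c = 0 := by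
    intro c hc
    refine ext_inner_left ℝ fun x => ?_
    obtain ⟨e, rfl⟩ : x ∈ LinearMap.range L1 := by rw [hL1]; trivial
    rw [hpol2, hc]; simp
  obtain ⟨g, hg⟩ := L1.exists_rightInverse_of_surjective hL1
  have hg' : ∀ x, L1 (g x) = x := fun x => LinearMap.congr_fun hg x
  let A := L2 ∘ₗ g
  have hAL : ∀ c, A (L1 c) = L2 c := by
    intro c
    have := hker (g (L1 c) - c) (by rw [map_sub, hg', sub_self])
    rw [map_sub, sub_eq_zero] at this
    exact this
  have hA0 : ∀ i, A (p i - p i0) = v i - v i0 := by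
    intro i
    have := hAL (Pi.single i 1)
    simpa [L1, L2] using this
  have hA : ∀ i j, A (p i - p j) = v i - v j := by
    intro i j
    have e1 : p i - p j = (p i - p i0) - (p j - p i0) := by abel
    rw [e1, map_sub, hA0, hA0]; abel
  have hcomm : ∀ x, A (C x) = C (A x) := by
    have : A ∘ₗ C.toLinearEquiv.toLinearMap = C.toLinearEquiv.toLinearMap ∘ₗ A := by
      apply LinearMap.ext_on_range htop
      intro i
      show A (C (p i - p i0)) = C (A (p i - p i0))
      rw [hA, map_sub C, map_sub C, hsym, hsym, hv, hv, hA]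
    intro x
    exact LinearMap.congr_fun this x
  refine ⟨A, ⟨?_, hcomm⟩, v i0 - A (p i0), ?_, ?_⟩
  · intro x y
    rw [← hg' x, ← hg' y, hAL, hAL, hpol2, neg_neg, real_inner_comm]
  · have : C (v i0 - A (p i0)) = v i0 - A (p i0) := by
      rw [map_sub, ← hcomm, hsym, hv]
      have := hA (σ i0) i0
      rw [map_sub] at this
      rw [sub_eq_sub_iff_sub_eq_sub, this]
    simpa [fixedSpace, sub_eq_zero] using this
  · intro i
    have := hA i i0
    rw [map_sub] at this
    rw [add_sub, add_comm, ← add_sub, this]; abel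

/-- the (polarized) squared length of an edge -/
def auxLen {d : ℕ} {V : Type*} (p q : V → Euc d) : Sym2 V → ℝ :=
  Sym2.lift ⟨fun i j => inner ℝ (p i - p j) (q i - q j), fun i j => by
    show inner ℝ (p i - p j) (q i - q j) = inner ℝ (p j - p i) (q j - q i)
    rw [← neg_sub (p j), ← neg_sub (q j), inner_neg_neg]⟩

lemma auxLen_mk {d : ℕ} {V : Type*} (p q : V → Euc d) (i j : V) :
    auxLen p q s(i, j) = inner ℝ (p i - p j) (q i - q j) := rfl

lemma auxLen_sym {d : ℕ} {V : Type*} (C : Euc d ≃ₗᵢ[ℝ] Euc d) (σ : Equiv.Perm V)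
    (p q : V → Euc d) (hp : ∀ i, C (p i) = p (σ i)) (hq : ∀ i, C (q i) = q (σ i)) (e : Sym2 V) :
    auxLen p q (Sym2.map σ e) = auxLen p q e := by
  induction e with
  | _ i j =>
    rw [Sym2.map_mk, auxLen_mk, auxLen_mk, ← hp, ← hp, ← hq, ← hq, ← map_sub, ← map_sub,
      LinearIsometryEquiv.inner_map_map]

/-- the rigidity map differential -/
def auxD {d : ℕ} {V : Type*} (G : SimpleGraph V) (p : V → Euc d) :
    (V → Euc d) →ₗ[ℝ] EuclideanSpace ℝ G.edgeSet where
  toFun q := WithLp.toLp 2 fun e => 2 * auxLen p q e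
  map_add' q r := by
    ext ⟨e, he⟩
    induction e with
    | _ i j =>
      simp only [PiLp.add_apply, auxLen_mk, Pi.add_apply]
      rw [add_sub_add_comm, inner_add_right]; ring
  map_smul' c q := by
    ext ⟨e, he⟩
    induction e with
    | _ i j =>
      simp only [PiLp.smul_apply, auxLen_mk, Pi.smul_apply, RingHom.id_apply, smul_eq_mul]
      rw [← smul_sub, inner_smul_right]; ring

lemma aux_map_mem {V : Type*} (G : SimpleGraph V) (σ : Equiv.Perm V)
    (hσadj : ∀ i j : V, G.Adj (σ i) (σ j) ↔ G.Adj i j) (e : Sym2 V) :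
    Sym2.map σ e ∈ G.edgeSet ↔ e ∈ G.edgeSet := by
  induction e with
  | _ i j => simp [hσadj]

lemma aux_map_map {V : Type*} (σ : Equiv.Perm V) (hσ : ∀ i, σ (σ i) = i) (e : Sym2 V) :
    Sym2.map σ (Sym2.map σ e) = e := by
  induction e with
  | _ i j => simp [hσ]

/-- the induced edge permutation -/
def auxTau {V : Type*} (G : SimpleGraph V) (σ : Equiv.Perm V) (hσ : ∀ i, σ (σ i) = i)
    (hσadj : ∀ i j : V, G.Adj (σ i) (σ j) ↔ G.Adj i j) : Equiv.Perm G.edgeSet where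
  toFun e := ⟨Sym2.map σ e.1, (aux_map_mem G σ hσadj e.1).2 e.2⟩
  invFun e := ⟨Sym2.map σ e.1, (aux_map_mem G σ hσadj e.1).2 e.2⟩
  left_inv e := Subtype.ext (aux_map_map σ hσ e.1)
  right_inv e := Subtype.ext (aux_map_map σ hσ e.1)

lemma aux_sum_edges {V : Type*} [Fintype V] [DecidableEq V] (G : SimpleGraph V)
    [DecidableRel G.Adj] (h : Sym2 V → ℝ) (h0 : ∀ e ∉ G.edgeSet, h e = 0) :
    ∑ i, ∑ j, h s(i, j) = ∑ e : G.edgeSet, 2 * h e := by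
  rw [← Fintype.sum_prod_type' (f := fun i j => h s(i, j)),
    ← Finset.sum_fiberwise (s := Finset.univ) (g := fun x : V × V => s(x.1, x.2))]
  have : ∑ e : G.edgeSet, 2 * h e = ∑ e : Sym2 V, 2 * h e := by
    rw [← Finset.sum_subset (Finset.subset_univ G.edgeFinset)]
    · exact (Finset.sum_subtype G.edgeFinset (by simp) (fun e => 2 * h e)).symm
    · intro e _ he
      rw [h0 e (by simpa using he), mul_zero]
  rw [this]
  refine Finset.sum_congr rfl fun e _ => ?_
  by_cases he : e ∈ G.edgeSet
  · induction e with
    | _ a b =>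
      have hab : a ≠ b := G.ne_of_adj (by simpa using he)
      have : (Finset.univ.filter fun x : V × V => s(x.1, x.2) = s(a, b)) = {(a, b), (b, a)} := by
        ext ⟨x, y⟩; simp
      rw [this, Finset.sum_pair (by simp [hab]), Sym2.eq_swap (a := b)]
      ring
  · rw [Finset.sum_congr rfl (g := fun _ => 0)]
    · simp [h0 e he]
    · intro x hx
      rw [(Finset.mem_filter.1 hx).2, h0 e he]

lemma auxX_mem {d : ℕ} {V : Type*} (C : Euc d ≃ₗᵢ[ℝ] Euc d) (σ : Equiv.Perm V)
    (hσ : ∀ i, σ (σ i) = i) (q : V → Euc d) :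
    q ∈ LinearMap.ker (auxT C σ - LinearMap.id) ↔ ∀ i, C (q i) = q (σ i) := by
  rw [LinearMap.mem_ker, LinearMap.sub_apply, sub_eq_zero, funext_iff]
  show (∀ i, C (q (σ i)) = q i) ↔ _
  constructor
  · intro h i; simpa [hσ] using h (σ i)
  · intro h i; simpa [hσ] using h (σ i)

lemma auxY_mem {E : Type*} (τ : Equiv.Perm E) (y : EuclideanSpace ℝ E) :
    y ∈ LinearMap.ker (auxR τ - LinearMap.id) ↔ ∀ e, y (τ e) = y e := by
  rw [LinearMap.mem_ker, LinearMap.sub_apply, sub_eq_zero]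
  constructor
  · intro h e; exact congrArg (fun z : EuclideanSpace ℝ E => z e) h
  · intro h; ext e; exact h e

lemma aux_range {d : ℕ} {V : Type*} [Fintype V] [DecidableEq V]
    (G : SimpleGraph V) [DecidableRel G.Adj]
    (C : Euc d ≃ₗᵢ[ℝ] Euc d)
    (σ : Equiv.Perm V) (hσ : ∀ i, σ (σ i) = i)
    (hσadj : ∀ i j : V, G.Adj (σ i) (σ j) ↔ G.Adj i j)
    (p : V → Euc d)
    (hsym : ∀ i, C (p i) = p (σ i))
    (hnostress : ∀ ω : Sym2 V → ℝ,
      (∀ i : V, ∑ j ∈ G.neighborFinset i, ω s(i, j) • (p i - p j) = 0) →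
      (∀ e ∈ G.edgeSet, ω (Sym2.map σ e) = ω e) →
      ∀ e ∈ G.edgeSet, ω e = 0) :
    (LinearMap.ker (auxT C σ - LinearMap.id)).map (auxD G p) =
      LinearMap.ker (auxR (auxTau G σ hσ hσadj) - LinearMap.id) := by
  set X := LinearMap.ker (auxT C σ - LinearMap.id) with hX
  set Y := LinearMap.ker (auxR (auxTau G σ hσ hσadj) - LinearMap.id) with hY
  have hle : X.map (auxD G p) ≤ Y := by
    rintro _ ⟨q, hq, rfl⟩
    rw [hY, auxY_mem]
    intro e
    have hq' := (auxX_mem C σ hσ q).1 hq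
    show 2 * auxLen p q (Sym2.map σ e.1) = 2 * auxLen p q e.1
    rw [auxLen_sym C σ p q hsym hq']
  rw [← Submodule.sup_orthogonal_inf_of_hasOrthogonalProjection hle]
  suffices h : (X.map (auxD G p))ᗮ ⊓ Y = ⊥ by rw [h, sup_bot_eq]
  rw [eq_bot_iff]
  rintro y ⟨hy1, hy2⟩
  have hy2' := (auxY_mem _ y).1 hy2
  let ω : Sym2 V → ℝ := fun e => if h : e ∈ G.edgeSet then y ⟨e, h⟩ else 0
  have hω : ∀ e (h : e ∈ G.edgeSet), ω e = y ⟨e, h⟩ := fun e h => dif_pos h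
  have hω0 : ∀ e, e ∉ G.edgeSet → ω e = 0 := fun e h => dif_neg h
  have hωs : ∀ e, ω (Sym2.map σ e) = ω e := by
    intro e
    by_cases h : e ∈ G.edgeSet
    · rw [hω e h, hω _ ((aux_map_mem G σ hσadj e).2 h)]
      exact hy2' ⟨e, h⟩
    · rw [hω0 e h, hω0 _ (fun h' => h ((aux_map_mem G σ hσadj e).1 h'))]
  let F : V → Euc d := fun i => ∑ j, ω s(i, j) • (p i - p j)
  have hF : F ∈ X := by
    rw [hX, auxX_mem C σ hσ]
    intro i
    show C (∑ j, _) = ∑ j, _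
    rw [map_sum, ← Equiv.sum_comp σ (fun j => ω s(σ i, j) • (p (σ i) - p j))]
    refine Finset.sum_congr rfl fun j _ => ?_
    have := hωs s(i, j)
    rw [Sym2.map_mk] at this
    rw [this, map_smul, map_sub, hsym, hsym]
  have horth : inner ℝ (auxD G p F) y = 0 :=
    (Submodule.mem_orthogonal _ _).1 hy1 _ ⟨F, hF, rfl⟩
  have hsum : ∑ i, ∑ j, ω s(i, j) * auxLen p F s(i, j) = 0 := by
    rw [aux_sum_edges G (fun e => ω e * auxLen p F e) (fun e he => by simp [hω0 e he]), ← horth,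
      PiLp.inner_apply]
    refine Finset.sum_congr rfl fun e _ => ?_
    rw [hω e.1 e.2]
    simp [auxD]
    ring
  have hsplit : ∑ i, ∑ j, ω s(i, j) * auxLen p F s(i, j) = 2 * ∑ i, inner ℝ (F i) (F i) := by
    have e1 : ∑ i, ∑ j, ω s(i, j) * inner ℝ (p i - p j) (F i) = ∑ i, inner ℝ (F i) (F i) := by
      refine Finset.sum_congr rfl fun i _ => ?_
      have : inner ℝ (F i) (F i) = inner ℝ (∑ j, ω s(i, j) • (p i - p j)) (F i) := rfl
      rw [this, sum_inner]
      refine Finset.sum_congr rfl fun j _ => ?_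
      rw [real_inner_smul_left]
    have e2 : ∑ i, ∑ j, ω s(i, j) * inner ℝ (p i - p j) (F j) = - ∑ i, inner ℝ (F i) (F i) := by
      rw [← e1, Finset.sum_comm, ← Finset.sum_neg_distrib]
      refine Finset.sum_congr rfl fun i _ => ?_
      rw [← Finset.sum_neg_distrib]
      refine Finset.sum_congr rfl fun j _ => ?_
      rw [Sym2.eq_swap, ← neg_sub (p i), inner_neg_left]; ring
    have : ∑ i, ∑ j, ω s(i, j) * auxLen p F s(i, j) =
        ∑ i, ∑ j, ω s(i, j) * inner ℝ (p i - p j) (F i) -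
        ∑ i, ∑ j, ω s(i, j) * inner ℝ (p i - p j) (F j) := by
      simp only [← Finset.sum_sub_distrib]
      refine Finset.sum_congr rfl fun i _ => Finset.sum_congr rfl fun j _ => ?_
      rw [auxLen_mk, inner_sub_right]; ring
    rw [this, e1, e2]; ring
  have hF0 : ∀ i, F i = 0 := by
    have h0 : ∑ i, inner ℝ (F i) (F i) = 0 := by linarith
    rw [Finset.sum_eq_zero_iff_of_nonneg (fun i _ => real_inner_self_nonneg)] at h0
    intro i
    exact inner_self_eq_zero.1 (h0 i (Finset.mem_univ i))
  have := hnostress ω (fun i => by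
    rw [← hF0 i]
    refine Finset.sum_subset (Finset.subset_univ _) fun j _ hj => ?_
    rw [hω0 _ (by simpa using hj), zero_smul]) (fun e _ => hωs e)
  rw [Submodule.mem_bot]
  ext e
  rw [← hω e.1 e.2, this e.1 e.2]
  rfl

lemma aux_deriv {d : ℕ} {V : Type*} [Fintype V] [DecidableEq V]
    (G : SimpleGraph V) [DecidableRel G.Adj] (X : Submodule ℝ (V → Euc d)) (p : X) :
    HasStrictFDerivAt
      (fun q : X => (WithLp.toLp 2 fun e => auxLen q.1 q.1 e.1 : EuclideanSpace ℝ G.edgeSet))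
      (LinearMap.toContinuousLinearMap ((auxD G p.1).domRestrict X)) p := by
  rw [hasStrictFDerivAt_euclidean]
  rintro ⟨e, he⟩
  induction e with
  | _ i j =>
    have h1 : ∀ k : V, HasStrictFDerivAt (fun q : X => q.1 k)
        ((ContinuousLinearMap.proj (R := ℝ) (φ := fun _ : V => Euc d) k).comp X.subtypeL) p :=
      fun k => ((ContinuousLinearMap.proj (R := ℝ) (φ := fun _ : V => Euc d) k).comp
        X.subtypeL).hasStrictFDerivAt
    have h2 := ((h1 i).sub (h1 j)).inner ℝ ((h1 i).sub (h1 j))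
    refine h2.congr_fderiv ?_
    ext v
    simp [auxD, auxLen_mk, fderivInnerCLM_apply]
    rw [real_inner_comm (p.1 i - p.1 j)]; ring

/-- Theorem 6.8(ii), half-turn symmetry in dimension `d > 4`:
`C ∈ O(d)` a half-turn (orthogonal involution whose fixed subspace has
dimension `d - 2`), `S = {I, C}`, `Φ(C) = σ` with
`j_C > b_C/(d-4) + (d(d-7)+8)/(2(d-4))`, and `|E| = d|V| - (d+1 choose 2)`;
then a symmetric framework spanning `ℝ^d` with no nonzero fully symmetric
self-stress has a symmetry-preserving finite flex. -/
theorem stmt_9 {d : ℕ} (hd : 4 < d) {V : Type*} [Fintype V] [DecidableEq V]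
    (G : SimpleGraph V) [DecidableRel G.Adj]
    (hcount : G.edgeFinset.card + (d + 1).choose 2 = d * Fintype.card V)
    (C : Euc d ≃ₗᵢ[ℝ] Euc d) (hC2 : ∀ v, C (C v) = v)
    (hhalf : Module.finrank ℝ (fixedSpace C) = d - 2)
    (σ : Equiv.Perm V) (hσ2 : σ * σ = 1)
    (hσadj : ∀ i j : V, G.Adj (σ i) (σ j) ↔ G.Adj i j)
    (hjb : (((Finset.univ.filter (fun i : V => σ i = i)).card : ℝ)) >
      ((G.edgeFinset.filter (fun e => Sym2.map σ e = e)).card : ℝ) / ((d : ℝ) - 4)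
        + ((d : ℝ) * ((d : ℝ) - 7) + 8) / (2 * ((d : ℝ) - 4)))
    (p : V → Euc d) (hp : Function.Injective p)
    (hsym : ∀ i, C (p i) = p (σ i))
    (hspan : affineSpan ℝ (Set.range p) = ⊤)
    (hnostress : ∀ ω : Sym2 V → ℝ,
      (∀ i : V, ∑ j ∈ G.neighborFinset i, ω s(i, j) • (p i - p j) = 0) →
      (∀ e ∈ G.edgeSet, ω (Sym2.map σ e) = ω e) →
      ∀ e ∈ G.edgeSet, ω e = 0) :
    ∃ P : ℝ → V → Euc d,
      ContinuousOn P (Set.Icc 0 1) ∧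
      P 0 = p ∧
      (∀ t ∈ Set.Icc (0:ℝ) 1, ∀ i j : V, G.Adj i j → ‖P t i - P t j‖ = ‖p i - p j‖) ∧
      (∃ k l : V, ∀ t ∈ Set.Ioc (0:ℝ) 1, ‖P t k - P t l‖ ≠ ‖p k - p l‖) ∧
      (∀ t ∈ Set.Icc (0:ℝ) 1, ∀ i, C (P t i) = P t (σ i)) := by
  have hσ : ∀ i, σ (σ i) = i := fun i => by
    have := congrArg (fun s : Equiv.Perm V => s i) hσ2
    simpa using this
  have hne : Nonempty V := by
    by_contra hV
    rw [not_nonempty_iff] at hV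
    rw [Set.range_eq_empty, AffineSubspace.span_empty] at hspan
    exact AffineSubspace.bot_ne_top ℝ (Euc d) (Euc d) hspan
  obtain ⟨i0⟩ := hne
  let X := LinearMap.ker (auxT (V := V) C σ - LinearMap.id)
  let τ := auxTau G σ hσ hσadj
  let Y := LinearMap.ker (auxR τ - LinearMap.id)
  have hXdim : 2 * (Module.finrank ℝ X : ℝ) = _ := auxX_finrank hd C σ hC2 hhalf hσ
  have hYdim : 2 * (Module.finrank ℝ Y : ℝ) = _ :=
    auxY_finrank τ (fun e => Subtype.ext (aux_map_map σ hσ e.1))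
  have hYb : (Finset.univ.filter (fun e => τ e = e)).card =
      (G.edgeFinset.filter (fun e => Sym2.map σ e = e)).card := by
    refine Finset.card_bij (fun e _ => e.1) ?_ ?_ ?_
    · intro e he
      rw [Finset.mem_filter] at he ⊢
      exact ⟨by simpa using e.2, congrArg Subtype.val he.2⟩
    · intro a _ b _ h
      exact Subtype.ext h
    · intro e he
      rw [Finset.mem_filter] at he
      exact ⟨⟨e, by simpa using he.1⟩, by
        rw [Finset.mem_filter]
        exact ⟨Finset.mem_univ _, Subtype.ext he.2⟩, rfl⟩
  have hYE : Fintype.card G.edgeSet = G.edgeFinset.card := by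
    rw [SimpleGraph.edgeFinset, Set.toFinset_card]
  rw [hYb, hYE] at hYdim
  have hrange : X.map (auxD G p) = Y := aux_range G C σ hσ hσadj p hsym hnostress
  have hpX : p ∈ X := (auxX_mem C σ hσ p).2 hsym
  let D := (auxD G p).domRestrict X
  have hDr : LinearMap.range D = Y := by rw [← hrange]; exact LinearMap.range_domRestrict _ _
  have hrn := D.finrank_range_add_finrank_ker
  rw [hDr] at hrn
  have hv : ∃ v : X, D v = 0 ∧ ∃ k l, inner ℝ (p k - p l) (v.1 k - v.1 l) ≠ 0 := by
    by_contra hcon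
    push Not at hcon
    let Θ : (auxSkew C × fixedSpace C) →ₗ[ℝ] (V → Euc d) :=
      { toFun := fun x i => x.1.1 (p i) + x.2.1
        map_add' := by intro x y; ext1 i; simp; abel
        map_smul' := by intro c x; ext1 i; simp }
    have hle : (LinearMap.ker D).map X.subtype ≤ LinearMap.range Θ := by
      rintro _ ⟨v, hv, rfl⟩
      obtain ⟨A, hA, t, ht, hAt⟩ := aux_triv C σ p v.1 i0 hsym hspan
        ((auxX_mem C σ hσ v.1).1 v.2) (hcon v hv)
      exact ⟨(⟨A, hA⟩, ⟨t, ht⟩), (funext hAt).symm⟩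
    have h1 := Submodule.finrank_mono hle
    rw [Submodule.finrank_map_subtype_eq] at h1
    have h2 := Θ.finrank_range_le
    rw [Module.finrank_prod, hhalf] at h2
    have h3 := auxSkew_finrank hd C hhalf
    have h4 : Module.finrank ℝ (LinearMap.ker D) ≤ (d - 2).choose 2 + 1 + (d - 2) := by omega
    have h5 : (Module.finrank ℝ (LinearMap.ker D) : ℝ) ≤
        ((d - 2).choose 2 : ℕ) + 1 + ((d - 2 : ℕ) : ℝ) := by exact_mod_cast h4
    rw [Nat.cast_choose_two, Nat.cast_sub (by omega)] at h5
    have h6 : (Module.finrank ℝ Y : ℝ) + Module.finrank ℝ (LinearMap.ker D) =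
      Module.finrank ℝ X := by exact_mod_cast hrn
    have h7 : (G.edgeFinset.card : ℝ) + ((d + 1).choose 2 : ℕ) = d * Fintype.card V := by
      exact_mod_cast hcount
    rw [Nat.cast_choose_two] at h7
    have hd4 : (0:ℝ) < d - 4 := by
      have : (4:ℝ) < d := by exact_mod_cast hd
      linarith
    have h8 : ((G.edgeFinset.filter (fun e => Sym2.map σ e = e)).card : ℝ) / ((d : ℝ) - 4)
        + ((d : ℝ) * ((d : ℝ) - 7) + 8) / (2 * ((d : ℝ) - 4)) =
        (((G.edgeFinset.filter (fun e => Sym2.map σ e = e)).card : ℝ) +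
          ((d : ℝ) * ((d : ℝ) - 7) + 8) / 2) / ((d : ℝ) - 4) := by
      field_simp
    rw [h8, gt_iff_lt, div_lt_iff₀ hd4] at hjb
    push_cast at h5 h7
    nlinarith
  obtain ⟨v, hDv, k, l, hkl⟩ := hv
  have hder := aux_deriv G X ⟨p, hpX⟩
  obtain ⟨γ, hγ0, hγ', ε, hε, hγc, hγf⟩ := aux_curve _ _ _ hder (by
    intro q
    have : LinearMap.range D = Y := hDr
    change _ ∈ LinearMap.range D
    rw [this, auxY_mem]
    intro e
    have hq := (auxX_mem C σ hσ q.1).1 q.2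
    exact auxLen_sym C σ q.1 q.1 hq hq e.1) v hDv
  have hc : ∀ i, HasDerivAt (fun t => (γ t).1 i) (v.1 i) 0 := by
    intro i
    exact ((ContinuousLinearMap.proj (R := ℝ) (φ := fun _ : V => Euc d) i).comp
        X.subtypeL).hasFDerivAt.comp_hasDerivAt (0:ℝ) hγ'
  have hlen : HasDerivAt (fun t => inner ℝ ((γ t).1 k - (γ t).1 l) ((γ t).1 k - (γ t).1 l))
      (2 * inner ℝ (p k - p l) (v.1 k - v.1 l)) 0 := by
    have := ((hc k).sub (hc l)).inner ℝ ((hc k).sub (hc l))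
    simp only [Pi.sub_apply, hγ0] at this
    rw [real_inner_comm, ← two_mul] at this
    first
      | exact this
      | (rw [real_inner_comm]; exact this)
  have hev := hlen.eventually_ne (c := inner ℝ (p k - p l) (p k - p l))
    (mul_ne_zero two_ne_zero hkl)
  rw [eventually_nhdsWithin_iff, Metric.eventually_nhds_iff] at hev
  obtain ⟨η, hη, hηb⟩ := hev
  let δ := min ε (η / 2)
  have hδ : 0 < δ := lt_min hε (by positivity)
  have hIcc : ∀ t ∈ Set.Icc (0:ℝ) 1, δ * t ∈ Set.Icc 0 ε := by
    rintro t ⟨h0, h1⟩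
    refine ⟨by positivity, ?_⟩
    calc δ * t ≤ δ * 1 := by gcongr
      _ ≤ ε := by rw [mul_one]; exact min_le_left _ _
  refine ⟨fun t => (γ (δ * t)).1, ?_, ?_, ?_, ⟨k, l, ?_⟩, ?_⟩
  · exact continuous_subtype_val.comp_continuousOn
      (hγc.comp (by fun_prop) hIcc)
  · simp [hγ0]
  · intro t ht i j hij
    have := congrArg (fun z : EuclideanSpace ℝ G.edgeSet => z ⟨s(i, j), hij⟩) (hγf _ (hIcc t ht))
    have h2 : inner ℝ ((γ (δ * t)).1 i - (γ (δ * t)).1 j) ((γ (δ * t)).1 i - (γ (δ * t)).1 j) =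
      inner ℝ (p i - p j) (p i - p j) := this
    rw [real_inner_self_eq_norm_sq, real_inner_self_eq_norm_sq] at h2
    exact (sq_eq_sq₀ (norm_nonneg _) (norm_nonneg _)).1 h2
  · rintro t ⟨h0, h1⟩ heq
    have hpos : 0 < δ * t := by positivity
    refine hηb (y := δ * t) ?_ hpos.ne' ?_
    · rw [Real.dist_eq, sub_zero, abs_of_pos hpos]
      calc δ * t ≤ δ * 1 := by gcongr
        _ ≤ η / 2 := by rw [mul_one]; exact min_le_right _ _
        _ < η := by linarith
    · rw [real_inner_self_eq_norm_sq, real_inner_self_eq_norm_sq, heq]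
  · intro t ht i
    exact (auxX_mem C σ hσ _).1 (γ (δ * t)).2 i
end
end
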